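/- arXiv:2105.00710 — 2 statements merged into one kernel-verified Lean document; each statement's English description precedes it below -/
import Mathlib

section
/- Let R and C be finite sets, let c : {0,1}^n × R → C be a function, let B be uniform on {0,1}^n, W uniform on R, and B' uniform on {0,1}^n, all independent. Suppose Δ( (c(B,W), B), (c(B,W), B') ) ≤ ε. Sample (b, w) uniformly from {0,1}^n × R, and then sample (b', w') uniformly from the set {(b'', w'') ∈ {0,1}^n × R : c(b'', w'') = c(b, w)}. Then Pr[b' = b] ≤ 2^{−n} + 2·sqrt(ε). -/
open Finset Real

/-- Statistical distance between two distributions on a finite type. -/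
noncomputable def statDist {Ω : Type*} [Fintype Ω] (p q : Ω → ℝ) : ℝ :=
  (1 / 2) * ∑ x, |p x - q x|

/-!
Resampling draws `b'` from the posterior of `b` given the commitment `y`, so the probability of
`b' = b` is the expectation of the posterior weight of `b` under the joint law of `(y, b)`. Had `b`
been independent of `y` and uniform, this expectation would be exactly `2⁻ⁿ`. Passing from one law
to the other costs at most their statistical distance, because the posterior takes values in
`[0, 1]`. That distance is also at most `1`, which gives `2⁻ⁿ + min ε 1`, and `min ε 1 ≤ √ε`.
-/

section StatDist

variable {Ω : Type*} [Fintype Ω] {p q f : Ω → ℝ}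

theorem sum_mul_le_sum_mul_add_statDist (hpq : ∑ x, p x = ∑ x, q x) (hf₀ : ∀ x, 0 ≤ f x)
    (hf₁ : ∀ x, f x ≤ 1) : ∑ x, p x * f x ≤ ∑ x, q x * f x + statDist p q := by
  -- As `p - q` has total mass zero, `f` may be recentred to take values in `[-1/2, 1/2]`.
  have hrecentre : ∑ x, p x * f x - ∑ x, q x * f x = ∑ x, (p x - q x) * (f x - 1 / 2) := by
    simp only [mul_sub, sub_mul, sum_sub_distrib, ← sum_mul, hpq]
    ring
  have hterm (x : Ω) : (p x - q x) * (f x - 1 / 2) ≤ 1 / 2 * |p x - q x| := calc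
    (p x - q x) * (f x - 1 / 2) ≤ |p x - q x| * |f x - 1 / 2| := by
      rw [← abs_mul]
      exact le_abs_self _
    _ ≤ |p x - q x| * (1 / 2) := by
      gcongr
      exact abs_le.2 ⟨by linarith [hf₀ x], by linarith [hf₁ x]⟩
    _ = 1 / 2 * |p x - q x| := mul_comm _ _
  rw [← sub_le_iff_le_add', hrecentre, statDist, mul_sum]
  exact sum_le_sum fun x _ ↦ hterm x

theorem statDist_le_one (hp₀ : ∀ x, 0 ≤ p x) (hq₀ : ∀ x, 0 ≤ q x) (hp : ∑ x, p x = 1)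
    (hq : ∑ x, q x = 1) : statDist p q ≤ 1 := calc
  statDist p q ≤ 1 / 2 * ∑ x, (p x + q x) := by
    unfold statDist
    gcongr with x
    exact abs_sub_le_of_nonneg_of_le (hp₀ x) (le_add_of_nonneg_right (hq₀ x)) (hq₀ x)
      (le_add_of_nonneg_left (hp₀ x))
  _ = 1 := by
    rw [sum_add_distrib, hp, hq]
    norm_num

end StatDist

section Posterior

variable {B C : Type*} [Fintype B]

/-- The marginal law of the first coordinate under the joint law `p`. -/
def fstMarginal (p : C × B → ℝ) (y : C) : ℝ :=
  ∑ b, p (y, b)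

/-- The conditional probability, under the joint law `p`, of the second coordinate of `yb` given its
first; it is zero when the first coordinate has probability zero. -/
noncomputable def posterior (p : C × B → ℝ) (yb : C × B) : ℝ :=
  p yb / fstMarginal p yb.1

/-- The law obtained from the joint law `p` by replacing the second coordinate with an independent
uniform one. -/
noncomputable def uniformizeSnd (p : C × B → ℝ) (yb : C × B) : ℝ :=
  fstMarginal p yb.1 / Fintype.card B

variable {p : C × B → ℝ}

theorem fstMarginal_nonneg (hp : ∀ yb, 0 ≤ p yb) (y : C) : 0 ≤ fstMarginal p y :=
  sum_nonneg fun _ _ ↦ hp _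

theorem le_fstMarginal (hp : ∀ yb, 0 ≤ p yb) (yb : C × B) : p yb ≤ fstMarginal p yb.1 :=
  single_le_sum (f := fun b ↦ p (yb.1, b)) (fun _ _ ↦ hp _) (mem_univ yb.2)

theorem posterior_nonneg (hp : ∀ yb, 0 ≤ p yb) (yb : C × B) : 0 ≤ posterior p yb :=
  div_nonneg (hp yb) (fstMarginal_nonneg hp yb.1)

theorem posterior_le_one (hp : ∀ yb, 0 ≤ p yb) (yb : C × B) : posterior p yb ≤ 1 :=
  div_le_one_of_le₀ (le_fstMarginal hp yb) (fstMarginal_nonneg hp yb.1)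

theorem fstMarginal_mul_posterior (hp : ∀ yb, 0 ≤ p yb) (yb : C × B) :
    fstMarginal p yb.1 * posterior p yb = p yb :=
  mul_div_cancel_of_imp' fun h ↦ le_antisymm (h ▸ le_fstMarginal hp yb) (hp yb)

theorem uniformizeSnd_nonneg (hp : ∀ yb, 0 ≤ p yb) (yb : C × B) : 0 ≤ uniformizeSnd p yb :=
  div_nonneg (fstMarginal_nonneg hp yb.1) (Nat.cast_nonneg _)

variable [Fintype C]

theorem sum_uniformizeSnd [Nonempty B] : ∑ yb, uniformizeSnd p yb = ∑ yb, p yb := by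
  simp only [Fintype.sum_prod_type, uniformizeSnd, sum_const, card_univ, nsmul_eq_mul]
  exact sum_congr rfl fun y _ ↦ mul_div_cancel₀ _ (by positivity)

theorem sum_uniformizeSnd_mul_posterior (hp : ∀ yb, 0 ≤ p yb) :
    ∑ yb, uniformizeSnd p yb * posterior p yb = (∑ yb, p yb) / Fintype.card B := by
  simp only [uniformizeSnd, div_mul_eq_mul_div, fstMarginal_mul_posterior hp, sum_div]

theorem sum_mul_posterior_le [Nonempty B] (hp : ∀ yb, 0 ≤ p yb) :
    ∑ yb, p yb * posterior p yb ≤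
      (∑ yb, p yb) / Fintype.card B + statDist p (uniformizeSnd p) := by
  rw [← sum_uniformizeSnd_mul_posterior hp]
  exact sum_mul_le_sum_mul_add_statDist sum_uniformizeSnd.symm (posterior_nonneg hp)
    (posterior_le_one hp)

end Posterior

section UniformLaw

variable {Ω α B C : Type*} [Fintype Ω] [DecidableEq α] [DecidableEq B] [DecidableEq C]

/-- The law of `X` when its argument is drawn uniformly from the finite sample space. -/
noncomputable def uniformLaw (X : Ω → α) (a : α) : ℝ :=
  #{ω | X ω = a} / Fintype.card Ω

theorem uniformLaw_nonneg (X : Ω → α) (a : α) : 0 ≤ uniformLaw X a := by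
  unfold uniformLaw
  positivity

theorem sum_uniformLaw_mul [Fintype α] (X : Ω → α) (g : α → ℝ) :
    ∑ a, uniformLaw X a * g a = (∑ ω, g (X ω)) / Fintype.card Ω := by
  have hfibre (a : α) : ∑ ω with X ω = a, g (X ω) = #{ω | X ω = a} * g a := by
    rw [← nsmul_eq_mul]
    exact sum_eq_card_nsmul fun ω hω ↦ congrArg g (mem_filter.1 hω).2
  simp only [uniformLaw, div_mul_eq_mul_div, ← sum_div, ← hfibre, sum_fiberwise]

theorem sum_uniformLaw [Nonempty Ω] [Fintype α] (X : Ω → α) : ∑ a, uniformLaw X a = 1 := by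
  simpa using sum_uniformLaw_mul X 1

theorem fstMarginal_uniformLaw [Fintype B] (c : Ω → C) (s : Ω → B) :
    fstMarginal (uniformLaw fun ω ↦ (c ω, s ω)) = uniformLaw c := by
  ext y
  simp only [fstMarginal, uniformLaw, ← sum_div, ← Nat.cast_sum, Prod.mk.injEq, ← filter_filter]
  rw [← card_eq_sum_card_fiberwise fun _ _ ↦ mem_coe.2 (mem_univ _)]

theorem uniformizeSnd_uniformLaw [Fintype B] (c : Ω → C) (s : Ω → B) (yb : C × B) :
    uniformizeSnd (uniformLaw fun ω ↦ (c ω, s ω)) yb = uniformLaw c yb.1 / Fintype.card B := by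
  rw [uniformizeSnd, fstMarginal_uniformLaw]

theorem posterior_uniformLaw [Nonempty Ω] [Fintype B] (c : Ω → C) (s : Ω → B) (y : C) (b : B) :
    posterior (uniformLaw fun ω ↦ (c ω, s ω)) (y, b) =
      (#{ω | c ω = y ∧ s ω = b} : ℝ) / #{ω | c ω = y} := by
  have hcard : (Fintype.card Ω : ℝ) ≠ 0 := by positivity
  simp only [posterior, fstMarginal_uniformLaw, uniformLaw, Prod.mk.injEq,
    div_div_div_cancel_right₀ hcard]

theorem uniformLaw_prodMk_fst {R : Type*} [Fintype B] [Fintype R] (c : B × R → C) (yb : C × B) :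
    uniformLaw (fun bw ↦ (c bw, bw.1)) yb =
      #{w | c (yb.2, w) = yb.1} / (Fintype.card B * Fintype.card R : ℝ) := by
  have hfibre : ({bw | (c bw, bw.1) = yb} : Finset (B × R)) =
      ({w | c (yb.2, w) = yb.1} : Finset R).map (.sectR yb.2 R) := by
    ext ⟨b, w⟩
    simp only [mem_filter, mem_univ, true_and, mem_map, Function.Embedding.sectR_apply,
      Prod.ext_iff]
    grind
  rw [uniformLaw, hfibre, card_map, Fintype.card_prod, Nat.cast_mul]

end UniformLaw

theorem min_one_le_sqrt (x : ℝ) : min x 1 ≤ √x := by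
  rcases le_total x 1 with hx | hx
  · exact (min_le_left x 1).trans (Real.le_sqrt_self_iff.2 hx)
  · exact (min_le_right x 1).trans (Real.one_le_sqrt.2 hx)

theorem stmt7_general {Ω B C : Type*} [Fintype Ω] [Nonempty Ω] [Fintype B] [DecidableEq B]
    [Fintype C] [DecidableEq C] (c : Ω → C) (s : Ω → B) (ε : ℝ)
    (hhide : statDist (uniformLaw fun ω ↦ (c ω, s ω))
      (fun yb ↦ uniformLaw c yb.1 / Fintype.card B) ≤ ε) :
    (∑ ω, (#{ω' | c ω' = c ω ∧ s ω' = s ω} : ℝ) / #{ω' | c ω' = c ω}) / Fintype.card Ω ≤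
      (Fintype.card B : ℝ)⁻¹ + min ε 1 := by
  have : Nonempty B := .map s ‹_›
  set p := uniformLaw fun ω ↦ (c ω, s ω) with hp
  have hp₀ : ∀ yb, 0 ≤ p yb := uniformLaw_nonneg _
  have hp₁ : ∑ yb, p yb = 1 := sum_uniformLaw _
  have hdist : statDist p (uniformizeSnd p) ≤ min ε 1 := by
    refine le_min ?_ (statDist_le_one hp₀ (uniformizeSnd_nonneg hp₀) hp₁
      (sum_uniformizeSnd.trans hp₁))
    simpa only [← uniformizeSnd_uniformLaw c s] using hhide
  calc
    _ = ∑ yb, p yb * posterior p yb := by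
      simp only [hp, sum_uniformLaw_mul, posterior_uniformLaw]
    _ ≤ (∑ yb, p yb) / Fintype.card B + statDist p (uniformizeSnd p) := sum_mul_posterior_le hp₀
    _ ≤ (Fintype.card B : ℝ)⁻¹ + min ε 1 := by
      rw [hp₁, one_div]
      gcongr

/-- Let `c : {0,1}ⁿ × R → C` be a string-commitment function that is
`ε`-statistically hiding, i.e. `Δ((c(B,W),B), (c(B,W),B')) ≤ ε` for independent uniform `B, W, B'`
with `B, B'` uniform on `{0,1}ⁿ`.  Sample `(b,w)` uniformly, then `(b',w')` uniformly from
`{(b'',w'') : c(b'',w'') = c(b,w)}`.  Then `Pr[b' = b] ≤ 2⁻ⁿ + 2√ε`. -/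
theorem stmt7 {R C : Type*} [Fintype R] [Fintype C] [DecidableEq C] [Nonempty R] (n : ℕ)
    (c : (Fin n → Bool) × R → C) (ε : ℝ)
    (hhide : statDist
        (fun yb : C × (Fin n → Bool) =>
          ((Finset.univ.filter (fun w : R => c (yb.2, w) = yb.1)).card : ℝ) /
            ((2 : ℝ) ^ n * (Fintype.card R : ℝ)))
        (fun yb : C × (Fin n → Bool) =>
          ((Finset.univ.filter (fun bw : (Fin n → Bool) × R => c bw = yb.1)).card : ℝ) /
            ((2 : ℝ) ^ n * ((2 : ℝ) ^ n * (Fintype.card R : ℝ)))) ≤ ε) :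
    (∑ bw : (Fin n → Bool) × R,
        ((Finset.univ.filter
            (fun bw' : (Fin n → Bool) × R => c bw' = c bw ∧ bw'.1 = bw.1)).card : ℝ) /
          ((Finset.univ.filter (fun bw' : (Fin n → Bool) × R => c bw' = c bw)).card : ℝ)) /
      ((2 : ℝ) ^ n * (Fintype.card R : ℝ)) ≤ ((2 : ℝ) ^ n)⁻¹ + 2 * Real.sqrt ε := by
  have hcard : (Fintype.card (Fin n → Bool) : ℝ) = 2 ^ n := by simp
  have hbound := stmt7_general c Prod.fst ε <| by
    simpa only [funext (uniformLaw_prodMk_fst c), uniformLaw, Fintype.card_prod, Nat.cast_mul,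
      hcard, div_div, mul_comm] using hhide
  rw [Fintype.card_prod, Nat.cast_mul, hcard] at hbound
  linarith [min_one_le_sqrt ε, Real.sqrt_nonneg ε]
end

section
/- Let h : {0,1}^n → {0,1}^m be a function, let R be a random variable over a finite domain, let g be a function on the support of R with values in {0,1}^m, and let X be jointly distributed with R, taking values in {0,1}^n, with h(X) = g(R) holding with probability 1. Let δ ≥ 0 and suppose H(g(R)) + H(X | R) ≥ n − δ. Define the distribution D_A over pairs by: sample r ← R, then sample x₁ and x₂ independently from the conditional distribution X|_{R=r}. Define the distribution Col over pairs by: sample x₁ uniformly from {0,1}^n, then sample x₂ uniformly from h⁻¹(h(x₁)). Then Δ(D_A, Col) ≤ 2·sqrt((ln 2 / 2)·δ). -/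
open Finset Real

/-- Shannon entropy (in bits) of a distribution on a finite type. -/
noncomputable def entropy {Ω : Type*} [Fintype Ω] (p : Ω → ℝ) : ℝ :=
  -∑ x, p x * Real.logb 2 (p x)

/-- Pushforward of a distribution along a map. -/
noncomputable def push {Ω Ω' : Type*} [Fintype Ω] [DecidableEq Ω'] (p : Ω → ℝ)
    (f : Ω → Ω') : Ω' → ℝ :=
  fun y => ∑ x, if f x = y then p x else 0

/-!
Write `Y = g(R) = h(X)`, and let `(X₁, X₂)` have law `D_A`: two copies of `X` that are independent
given `R`. Both `R` and `(X₁, X₂)` determine `Y`, so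
`H(X₁, X₂) ≥ H(Y) + H(X₁, X₂ | R) = H(Y) + 2 H(X | R)`. On the other hand
`D(D_A ‖ Col) = n + E[log |h⁻¹(Y)|] - H(X₁, X₂)`, and `E[log |h⁻¹(Y)|] ≤ n - H(Y)` by Gibbs'
inequality against the law of `h` at a uniform point. Hence
`D(D_A ‖ Col) ≤ 2 (n - H(Y) - H(X | R)) ≤ 2 δ`, and a single application of Pinsker's inequality
gives `Δ(D_A, Col) ≤ √(δ ln 2)`, which is smaller than the required bound by a factor `√2`.
-/

section Push

variable {Ω Ω' Ω'' : Type*} [Fintype Ω] [DecidableEq Ω'] [DecidableEq Ω''] {p : Ω → ℝ}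

lemma sum_push_mul [Fintype Ω'] (p : Ω → ℝ) (f : Ω → Ω') (φ : Ω' → ℝ) :
    ∑ y, push p f y * φ y = ∑ x, p x * φ (f x) := by
  simp only [push, sum_mul, ite_mul, zero_mul]
  rw [sum_comm]
  simp only [sum_ite_eq, mem_univ, if_true]

lemma push_push [Fintype Ω'] (p : Ω → ℝ) (f : Ω → Ω') (g : Ω' → Ω'') :
    push (push p f) g = push p (fun x ↦ g (f x)) := by
  ext y
  simpa [push] using sum_push_mul p f (fun z ↦ if g z = y then 1 else 0)

lemma push_nonneg (hp : ∀ x, 0 ≤ p x) (f : Ω → Ω') (y : Ω') : 0 ≤ push p f y := by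
  refine sum_nonneg fun x _ ↦ ?_
  split_ifs
  exacts [hp x, le_rfl]

lemma push_mem_stdSimplex [Fintype Ω'] (hp : p ∈ stdSimplex ℝ Ω) (f : Ω → Ω') :
    push p f ∈ stdSimplex ℝ Ω' :=
  ⟨push_nonneg hp.1 f, by simpa [hp.2] using sum_push_mul p f 1⟩

lemma le_push (hp : ∀ x, 0 ≤ p x) (f : Ω → Ω') (x : Ω) : p x ≤ push p f (f x) := by
  have hle := single_le_sum (f := fun x' ↦ if f x' = f x then p x' else 0)
    (fun x' _ ↦ by split_ifs; exacts [hp x', le_rfl]) (mem_univ x)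
  simpa only [push, if_true] using hle

lemma push_pos (hp : ∀ x, 0 ≤ p x) (f : Ω → Ω') {x : Ω} (hx : p x ≠ 0) : 0 < push p f (f x) :=
  ((hp x).lt_of_ne' hx).trans_le (le_push hp f x)

lemma push_congr_of_ne_zero {f g : Ω → Ω'} (hfg : ∀ x, p x ≠ 0 → f x = g x) :
    push p f = push p g := by
  ext y
  refine sum_congr rfl fun x _ ↦ ?_
  by_cases hx : p x = 0
  · simp [hx]
  · rw [hfg x hx]

lemma exists_of_push_ne_zero {f : Ω → Ω'} {y : Ω'} (hy : push p f y ≠ 0) :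
    ∃ x, p x ≠ 0 ∧ f x = y := by
  obtain ⟨x, -, hx⟩ := exists_ne_zero_of_sum_ne_zero hy
  exact ⟨x, by simpa [and_comm] using hx⟩

lemma entropy_push [Fintype Ω'] (p : Ω → ℝ) (f : Ω → Ω') :
    entropy (push p f) = -∑ x, p x * logb 2 (push p f (f x)) :=
  congrArg Neg.neg (sum_push_mul p f fun y ↦ logb 2 (push p f y))

end Push

section Pinsker

open InformationTheory

lemma three_mul_sq_le_mul_klFun {t : ℝ} (ht : 0 ≤ t) :
    3 * (t - 1) ^ 2 ≤ (2 * t + 4) * klFun t := by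
  let F : ℝ → ℝ := fun s ↦ (2 * s + 4) * klFun s - 3 * (s - 1) ^ 2
  let F' : ℝ → ℝ := fun s ↦ 2 * klFun s + (2 * s + 4) * log s - 6 * (s - 1)
  have hlin (s : ℝ) : HasDerivAt (fun s : ℝ ↦ 2 * s + 4) 2 s := by
    simpa using ((hasDerivAt_id s).const_mul 2).add_const 4
  have hF {s : ℝ} (hs : s ≠ 0) : HasDerivAt F (F' s) s := by
    refine (((hlin s).mul (hasDerivAt_klFun hs)).sub
      ((((hasDerivAt_id s).sub_const 1).pow 2).const_mul 3)).congr_deriv ?_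
    simp only [F', id_eq]
    ring
  have hF' {s : ℝ} (hs : s ≠ 0) : HasDerivAt F' (4 * (log s - (1 - s⁻¹))) s := by
    refine ((((hasDerivAt_klFun hs).const_mul 2).add ((hlin s).mul (hasDerivAt_log hs))).sub
      (((hasDerivAt_id s).sub_const 1).const_mul 6)).congr_deriv ?_
    field_simp
    ring
  have hconvex : ConvexOn ℝ (Set.Ici 0) F := by
    refine convexOn_of_hasDerivWithinAt2_nonneg (convex_Ici 0) (f' := F')
      (f'' := fun s ↦ 4 * (log s - (1 - s⁻¹))) (by fun_prop) ?_ ?_ ?_ <;>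
      intro s hs <;> rw [interior_Ici] at hs
    · exact (hF hs.ne').hasDerivWithinAt
    · exact (hF' hs.ne').hasDerivWithinAt
    · linarith [one_sub_inv_le_log_of_pos hs]
  have hmin : IsMinOn F (Set.Ici 0) 1 := by
    refine hconvex.isMinOn_of_rightDeriv_eq_zero (by simp) ?_
    rw [(hF one_ne_zero).hasDerivWithinAt.derivWithin (uniqueDiffWithinAt_Ioi 1)]
    simp [F', klFun_one]
  have h1t : F 1 ≤ F t := hmin ht
  simp only [F, klFun_one] at h1t
  linarith

variable {Ω : Type*} [Fintype Ω] {p w : Ω → ℝ}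

/-- Relative entropy (Kullback–Leibler divergence) `D(p ‖ w)` in bits, used to bound statistical
distances. Where `w` vanishes and `p` does not, the summand is `0` instead of `∞`, so this is the
usual notion only when the support of `p` is contained in that of `w`. -/
noncomputable def relEntropy (p w : Ω → ℝ) : ℝ :=
  ∑ x, p x * logb 2 (p x / w x)

lemma log_two_mul_relEntropy (hpw : ∀ x, w x = 0 → p x = 0) :
    log 2 * relEntropy p w = ∑ x, w x * klFun (p x / w x) + ∑ x, p x - ∑ x, w x := by
  rw [relEntropy, mul_sum, ← sum_add_distrib, ← sum_sub_distrib]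
  refine sum_congr rfl fun x _ ↦ ?_
  by_cases hw : w x = 0
  · simp [hw, hpw x hw]
  · have h2 : log 2 ≠ 0 := (log_pos one_lt_two).ne'
    rw [klFun, logb]
    field_simp
    ring

lemma sum_mul_klFun_le (hp1 : ∑ x, p x = 1) (hw1 : ∑ x, w x ≤ 1)
    (hpw : ∀ x, w x = 0 → p x = 0) :
    ∑ x, w x * klFun (p x / w x) ≤ log 2 * relEntropy p w := by
  linarith [log_two_mul_relEntropy hpw]

lemma relEntropy_nonneg (hp : p ∈ stdSimplex ℝ Ω) (hw0 : ∀ x, 0 ≤ w x) (hw1 : ∑ x, w x ≤ 1)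
    (hpw : ∀ x, w x = 0 → p x = 0) : 0 ≤ relEntropy p w := by
  refine nonneg_of_mul_nonneg_right ?_ (log_pos one_lt_two)
  refine le_trans (sum_nonneg fun x _ ↦ ?_) (sum_mul_klFun_le hp.2 hw1 hpw)
  exact mul_nonneg (hw0 x) (klFun_nonneg (div_nonneg (hp.1 x) (hw0 x)))

lemma sq_sub_le_mul_klFun_div {a b : ℝ} (ha : 0 ≤ a) (hb : 0 ≤ b) (hab : b = 0 → a = 0) :
    (a - b) ^ 2 ≤ (2 * a + 4 * b) / 3 * (b * klFun (a / b)) := by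
  rcases hb.eq_or_lt with rfl | hb
  · simp [hab rfl]
  have ht := mul_le_mul_of_nonneg_left (three_mul_sq_le_mul_klFun (div_nonneg ha hb.le))
    (sq_nonneg b)
  calc (a - b) ^ 2 = b ^ 2 * (3 * (a / b - 1) ^ 2) / 3 := by field_simp
    _ ≤ b ^ 2 * ((2 * (a / b) + 4) * klFun (a / b)) / 3 := by gcongr
    _ = (2 * a + 4 * b) / 3 * (b * klFun (a / b)) := by field_simp

theorem statDist_sq_le_relEntropy (hp : p ∈ stdSimplex ℝ Ω) (hw0 : ∀ x, 0 ≤ w x)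
    (hw1 : ∑ x, w x ≤ 1) (hpw : ∀ x, w x = 0 → p x = 0) :
    statDist p w ^ 2 ≤ log 2 / 2 * relEntropy p w := by
  have hklFun (x : Ω) : 0 ≤ w x * klFun (p x / w x) :=
    mul_nonneg (hw0 x) (klFun_nonneg (div_nonneg (hp.1 x) (hw0 x)))
  have hweights : ∑ x, (2 * p x + 4 * w x) / 3 ≤ 2 := by
    rw [← sum_div, sum_add_distrib, ← mul_sum, ← mul_sum, hp.2]
    linarith
  have hsq : (∑ x, |p x - w x|) ^ 2 ≤ 2 * (log 2 * relEntropy p w) :=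
    calc (∑ x, |p x - w x|) ^ 2
        ≤ (∑ x, (2 * p x + 4 * w x) / 3) * ∑ x, w x * klFun (p x / w x) := by
          refine sum_sq_le_sum_mul_sum_of_sq_le_mul _ (fun x _ ↦ ?_) (fun x _ ↦ hklFun x)
            fun x _ ↦ ?_
          · linarith [hp.1 x, hw0 x]
          · rw [sq_abs]
            exact sq_sub_le_mul_klFun_div (hp.1 x) (hw0 x) (hpw x)
      _ ≤ 2 * ∑ x, w x * klFun (p x / w x) := by
          gcongr
          exact sum_nonneg fun x _ ↦ hklFun x
      _ ≤ 2 * (log 2 * relEntropy p w) := by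
          gcongr
          exact sum_mul_klFun_le hp.2 hw1 hpw
  rw [statDist, mul_pow]
  linarith

end Pinsker

section CondEntropy

variable {R X Y : Type*} [Fintype X] {p : R × X → ℝ}

/-- The conditional law of the second coordinate of a joint law `p`, given that the first one is
`r`; it is `0` if `r` has probability `0`. -/
noncomputable def condDist (p : R × X → ℝ) (r : R) (x : X) : ℝ :=
  p (r, x) / ∑ x', p (r, x')

lemma condDist_mem_stdSimplex (hp : ∀ z, 0 ≤ p z) {r : R} (hr : ∑ x, p (r, x) ≠ 0) :
    condDist p r ∈ stdSimplex ℝ X := by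
  refine ⟨fun x ↦ div_nonneg (hp (r, x)) (sum_nonneg fun x' _ ↦ hp (r, x')), ?_⟩
  simp only [condDist]
  rw [← sum_div, div_self hr]

lemma sum_mul_condDist (hp : ∀ z, 0 ≤ p z) (r : R) (x : X) :
    (∑ x', p (r, x')) * condDist p r x = p (r, x) := by
  refine mul_div_cancel_of_imp' fun hr ↦ ?_
  exact (sum_eq_zero_iff_of_nonneg fun x' _ ↦ hp (r, x')).1 hr x (mem_univ x)

variable [Fintype R]

/-- The conditional Shannon entropy `H(X | R)`, in bits, for a joint law `p` of `(R, X)`. -/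
noncomputable def condEntropy (p : R × X → ℝ) : ℝ :=
  ∑ r, (∑ x, p (r, x)) * entropy (condDist p r)

lemma condEntropy_eq_sum (hp : ∀ z, 0 ≤ p z) :
    condEntropy p = -∑ z, p z * logb 2 (condDist p z.1 z.2) := by
  rw [Fintype.sum_prod_type, condEntropy, ← sum_neg_distrib]
  refine sum_congr rfl fun r _ ↦ ?_
  rw [entropy, mul_neg, mul_sum]
  simp only [← mul_assoc, sum_mul_condDist hp]

lemma push_fst [DecidableEq R] (p : R × X → ℝ) (r : R) :
    push p Prod.fst r = ∑ x, p (r, x) := by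
  simp [push, Fintype.sum_prod_type_right]

lemma push_snd [DecidableEq X] (p : R × X → ℝ) (x : X) :
    push p Prod.snd x = ∑ r, p (r, x) := by
  simp [push, Fintype.sum_prod_type]

variable [DecidableEq X] [DecidableEq Y] {f : X → Y} {g : R → Y}

/-- The law of `(R, X)` after `R` and `X` have been made independent given `Y`, where `g` and `f`
express `Y` as a function of `R` and of `X`; it is the reference law in the comparison of `H(X)`
with `H(Y) + H(X | R)`. -/
noncomputable def condIndepDist (p : R × X → ℝ) (f : X → Y) (g : R → Y) (z : R × X) : ℝ :=
  push p Prod.snd z.2 *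
    ((if g z.1 = f z.2 then ∑ x, p (z.1, x) else 0) / push p (fun z ↦ g z.1) (f z.2))

lemma condIndepDist_nonneg (hp : ∀ z, 0 ≤ p z) (z : R × X) : 0 ≤ condIndepDist p f g z := by
  refine mul_nonneg (push_nonneg hp _ _) (div_nonneg ?_ (push_nonneg hp _ _))
  split_ifs
  exacts [sum_nonneg fun x _ ↦ hp (z.1, x), le_rfl]

lemma sum_condIndepDist_le_one (hp : p ∈ stdSimplex ℝ (R × X)) :
    ∑ z, condIndepDist p f g z ≤ 1 := by
  classical
  have hsnd := push_mem_stdSimplex hp Prod.snd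
  rw [← hsnd.2, Fintype.sum_prod_type_right]
  refine sum_le_sum fun x _ ↦ ?_
  simp only [condIndepDist, ← push_fst]
  rw [← mul_sum, ← sum_div]
  refine mul_le_of_le_one_right (hsnd.1 x) ?_
  rw [← push_push p Prod.fst g]
  exact div_self_le_one _

theorem entropy_push_add_condEntropy_le [Fintype Y] (hp : p ∈ stdSimplex ℝ (R × X))
    (hfg : ∀ z, p z ≠ 0 → f z.2 = g z.1) :
    entropy (push p fun z ↦ g z.1) + condEntropy p ≤ entropy (push p Prod.snd) := by
  classical
  have hfst {z} (hz : p z ≠ 0) : 0 < ∑ x, p (z.1, x) :=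
    push_fst p z.1 ▸ push_pos hp.1 Prod.fst hz
  have hsnd {z} (hz : p z ≠ 0) := push_pos hp.1 Prod.snd hz
  have hY {z} (hz : p z ≠ 0) := push_pos hp.1 (fun z ↦ g z.1) hz
  have hval {z} (hz : p z ≠ 0) : condIndepDist p f g z =
      push p Prod.snd z.2 * ((∑ x, p (z.1, x)) / push p (fun z ↦ g z.1) (g z.1)) := by
    simp only [condIndepDist, hfg z hz, if_true]
  have hnonneg : 0 ≤ relEntropy p (condIndepDist p f g) := by
    refine relEntropy_nonneg hp (condIndepDist_nonneg hp.1) (sum_condIndepDist_le_one hp) fun z ↦ ?_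
    contrapose!
    intro hz
    rw [hval hz]
    exact (mul_pos (hsnd hz) (div_pos (hfst hz) (hY hz))).ne'
  have hchain : relEntropy p (condIndepDist p f g) =
      entropy (push p Prod.snd) - entropy (push p fun z ↦ g z.1) - condEntropy p := by
    rw [entropy_push, entropy_push, condEntropy_eq_sum hp.1, relEntropy, sub_neg_eq_add,
      sub_neg_eq_add, ← sum_neg_distrib, ← sum_add_distrib, ← sum_add_distrib]
    refine sum_congr rfl fun z _ ↦ ?_
    by_cases hz : p z = 0
    · simp [hz]
    have := hfst hz
    have := hsnd hz
    have := hY hz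
    have hratio : p z / condIndepDist p f g z =
        push p (fun z ↦ g z.1) (g z.1) * condDist p z.1 z.2 / push p Prod.snd z.2 := by
      rw [hval hz, condDist]
      field_simp
    have hcond : condDist p z.1 z.2 ≠ 0 := div_ne_zero hz (hfst hz).ne'
    rw [hratio, logb_div (by positivity) (by positivity), logb_mul (by positivity) hcond]
    ring
  linarith

end CondEntropy

section CondPair

variable {R X Z : Type*} [Fintype X]

lemma sum_prod_mul [Fintype Z] (a : X → ℝ) (b : Z → ℝ) :
    ∑ z : X × Z, a z.1 * b z.2 = (∑ x, a x) * ∑ x, b x := by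
  rw [Fintype.sum_mul_sum, Fintype.sum_prod_type]

lemma entropy_prod [Fintype Z] {a : X → ℝ} {b : Z → ℝ} (ha : ∑ x, a x = 1)
    (hb : ∑ x, b x = 1) :
    entropy (fun z : X × Z ↦ a z.1 * b z.2) = entropy a + entropy b := by
  have hlog (z : X × Z) : a z.1 * b z.2 * logb 2 (a z.1 * b z.2) =
      a z.1 * logb 2 (a z.1) * b z.2 + a z.1 * (b z.2 * logb 2 (b z.2)) := by
    by_cases h₁ : a z.1 = 0
    · simp [h₁]
    by_cases h₂ : b z.2 = 0
    · simp [h₂]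
    rw [logb_mul h₁ h₂]
    ring
  simp only [entropy, hlog, sum_add_distrib]
  rw [sum_prod_mul (fun x ↦ a x * logb 2 (a x)) b, sum_prod_mul a fun x ↦ b x * logb 2 (b x),
    ha, hb]
  ring

variable {p : R × X → ℝ}

/-- The joint law of `(R, (X₁, X₂))`, where `X₁` and `X₂` are independent samples of the
conditional law of `X` given `R`. -/
noncomputable def condPair (p : R × X → ℝ) (z : R × X × X) : ℝ :=
  (∑ x, p (z.1, x)) * (condDist p z.1 z.2.1 * condDist p z.1 z.2.2)

lemma ne_zero_of_condPair_ne_zero {z : R × X × X} (hz : condPair p z ≠ 0) :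
    p (z.1, z.2.1) ≠ 0 ∧ p (z.1, z.2.2) ≠ 0 := by
  constructor <;> contrapose! hz <;> simp [condPair, condDist, hz]

lemma sum_condPair (hp : ∀ z, 0 ≤ p z) (r : R) : ∑ z, condPair p (r, z) = ∑ x, p (r, x) := by
  simp only [condPair]
  rw [← mul_sum, sum_prod_mul]
  by_cases hr : ∑ x, p (r, x) = 0
  · rw [hr, zero_mul]
  · simp only [(condDist_mem_stdSimplex hp hr).2, mul_one]

variable [Fintype R]

lemma condPair_mem_stdSimplex (hp : p ∈ stdSimplex ℝ (R × X)) :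
    condPair p ∈ stdSimplex ℝ (R × X × X) := by
  have hfst (r : R) : 0 ≤ ∑ x, p (r, x) := sum_nonneg fun x _ ↦ hp.1 (r, x)
  have hcond (r : R) (x : X) : 0 ≤ condDist p r x := div_nonneg (hp.1 (r, x)) (hfst r)
  refine ⟨fun z ↦ mul_nonneg (hfst _) (mul_nonneg (hcond _ _) (hcond _ _)), ?_⟩
  rw [Fintype.sum_prod_type, ← hp.2, Fintype.sum_prod_type]
  simp only [sum_condPair hp.1]

lemma condEntropy_condPair (hp : ∀ z, 0 ≤ p z) : condEntropy (condPair p) = 2 * condEntropy p := by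
  rw [condEntropy, condEntropy, mul_sum]
  refine sum_congr rfl fun r _ ↦ ?_
  rw [sum_condPair hp]
  by_cases hr : ∑ x, p (r, x) = 0
  · simp [hr]
  have hcond : condDist (condPair p) r = fun z ↦ condDist p r z.1 * condDist p r z.2 := by
    ext z
    rw [condDist, sum_condPair hp, condPair, mul_div_cancel_left₀ _ hr]
  have hsum := (condDist_mem_stdSimplex hp hr).2
  rw [hcond, entropy_prod hsum hsum]
  ring

/-- The distribution `D_A` of two independent samples of the conditional law of `X` given a common
sample of `R`. -/
noncomputable def pairDist (p : R × X → ℝ) (z : X × X) : ℝ :=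
  ∑ r, condPair p (r, z)

lemma push_snd_condPair [DecidableEq X] (p : R × X → ℝ) :
    push (condPair p) Prod.snd = pairDist p :=
  funext (push_snd (condPair p))

lemma pairDist_mem_stdSimplex (hp : p ∈ stdSimplex ℝ (R × X)) :
    pairDist p ∈ stdSimplex ℝ (X × X) := by
  classical
  exact push_snd_condPair p ▸ push_mem_stdSimplex (condPair_mem_stdSimplex hp) Prod.snd

end CondPair

section Collision

variable {X Y : Type*} [Fintype X] [DecidableEq Y]

/-- The ideal collision distribution `Col` of `h`: a uniform point together with a uniform point of
its fibre. -/
noncomputable def colDist (h : X → Y) (z : X × X) : ℝ :=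
  (Fintype.card X : ℝ)⁻¹ * if h z.2 = h z.1 then (#{x | h x = h z.1} : ℝ)⁻¹ else 0

lemma card_fiber_pos (h : X → Y) (x : X) : 0 < #{x' | h x' = h x} :=
  card_pos.2 ⟨x, by simp⟩

lemma colDist_nonneg (h : X → Y) (z : X × X) : 0 ≤ colDist h z := by
  unfold colDist
  positivity

lemma sum_colDist_le_one (h : X → Y) : ∑ z, colDist h z ≤ 1 := by
  have hfiber (x : X) : ∑ x', colDist h (x, x') = (Fintype.card X : ℝ)⁻¹ := by
    have hcard : (#{x' | h x' = h x} : ℝ) ≠ 0 := by exact_mod_cast (card_fiber_pos h x).ne'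
    simp only [colDist]
    rw [← mul_sum, ← sum_filter, sum_const, nsmul_eq_mul, mul_inv_cancel₀ hcard, mul_one]
  rw [Fintype.sum_prod_type]
  simp only [hfiber, sum_const, card_univ, nsmul_eq_mul]
  exact mul_inv_le_one

lemma colDist_pos {h : X → Y} {z : X × X} (hz : h z.2 = h z.1) : 0 < colDist h z := by
  have : Nonempty X := ⟨z.1⟩
  have := card_fiber_pos h z.1
  rw [colDist, if_pos hz]
  positivity

variable [Fintype Y]

lemma entropy_add_sum_logb_card_fiber_le {h : X → Y} {q : Y → ℝ} (hq : q ∈ stdSimplex ℝ Y)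
    (hqh : ∀ y, q y ≠ 0 → ∃ x, h x = y) :
    entropy q + ∑ y, q y * logb 2 #{x | h x = y} ≤ logb 2 (Fintype.card X) := by
  let w : Y → ℝ := fun y ↦ #{x | h x = y} / Fintype.card X
  have hcard {y} (hy : q y ≠ 0) : (#{x | h x = y} : ℝ) ≠ 0 ∧ (Fintype.card X : ℝ) ≠ 0 := by
    obtain ⟨x, rfl⟩ := hqh y hy
    have : Nonempty X := ⟨x⟩
    exact ⟨by exact_mod_cast (card_fiber_pos h x).ne', by positivity⟩
  have hw1 : ∑ y, w y ≤ 1 := by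
    rw [← sum_div, ← Nat.cast_sum, ← card_eq_sum_card_fiberwise fun x _ ↦ mem_univ (h x)]
    exact div_self_le_one _
  have hnonneg : 0 ≤ relEntropy q w := by
    refine relEntropy_nonneg hq (fun y ↦ by positivity) hw1 fun y ↦ ?_
    contrapose!
    exact fun hy ↦ div_ne_zero (hcard hy).1 (hcard hy).2
  have hexpand : relEntropy q w =
      logb 2 (Fintype.card X) - entropy q - ∑ y, q y * logb 2 #{x | h x = y} := by
    rw [entropy, sub_neg_eq_add, ← one_mul (logb 2 _), ← hq.2, sum_mul, ← sum_add_distrib,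
      ← sum_sub_distrib]
    refine sum_congr rfl fun y _ ↦ ?_
    by_cases hy : q y = 0
    · simp [hy]
    obtain ⟨hfiber, hX⟩ := hcard hy
    rw [logb_div hy (div_ne_zero hfiber hX), logb_div hfiber hX]
    ring
  linarith

lemma relEntropy_colDist {h : X → Y} {s : X × X → ℝ} (hs : ∑ z, s z = 1)
    (hsh : ∀ z, s z ≠ 0 → h z.2 = h z.1) :
    relEntropy s (colDist h) = logb 2 (Fintype.card X)
      + ∑ y, push s (fun z ↦ h z.1) y * logb 2 #{x | h x = y} - entropy s := by
  rw [sum_push_mul, entropy, sub_neg_eq_add, ← one_mul (logb 2 (Fintype.card X : ℝ)), ← hs,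
    sum_mul, ← sum_add_distrib, ← sum_add_distrib]
  refine sum_congr rfl fun z _ ↦ ?_
  by_cases hz : s z = 0
  · simp [hz]
  have : Nonempty X := ⟨z.1⟩
  have hX : (Fintype.card X : ℝ)⁻¹ ≠ 0 := by positivity
  have hfiber : (#{x | h x = h z.1} : ℝ)⁻¹ ≠ 0 :=
    inv_ne_zero (by exact_mod_cast (card_fiber_pos h z.1).ne')
  rw [colDist, if_pos (hsh z hz), logb_div hz (mul_ne_zero hX hfiber), logb_mul hX hfiber,
    logb_inv, logb_inv]
  ring

lemma relEntropy_colDist_le {h : X → Y} {s : X × X → ℝ} (hs : s ∈ stdSimplex ℝ (X × X))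
    (hsh : ∀ z, s z ≠ 0 → h z.2 = h z.1) :
    relEntropy s (colDist h) ≤
      2 * logb 2 (Fintype.card X) - entropy (push s fun z ↦ h z.1) - entropy s := by
  have hY := entropy_add_sum_logb_card_fiber_le (h := h)
    (push_mem_stdSimplex hs fun z ↦ h z.1) fun y hy ↦ by
      obtain ⟨z, -, hz⟩ := exists_of_push_ne_zero hy
      exact ⟨z.1, hz⟩
  linarith [relEntropy_colDist hs.2 hsh]

end Collision

section Main

variable {R X Y : Type*} [Fintype R] [Fintype X] {h : X → Y} {g : R → Y} {p : R × X → ℝ}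

lemma eq_of_pairDist_ne_zero (hhg : ∀ z, p z ≠ 0 → h z.2 = g z.1) {z : X × X}
    (hz : pairDist p z ≠ 0) : h z.2 = h z.1 := by
  obtain ⟨r, -, hr⟩ := exists_ne_zero_of_sum_ne_zero hz
  obtain ⟨hp₁, hp₂⟩ := ne_zero_of_condPair_ne_zero hr
  exact (hhg _ hp₂).trans (hhg _ hp₁).symm

variable [Fintype Y] [DecidableEq Y]

theorem relEntropy_pairDist_colDist_le (hp : p ∈ stdSimplex ℝ (R × X))
    (hhg : ∀ z, p z ≠ 0 → h z.2 = g z.1) :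
    relEntropy (pairDist p) (colDist h) ≤
      2 * (logb 2 (Fintype.card X) - (entropy (push p fun z ↦ g z.1) + condEntropy p)) := by
  classical
  have hpair := condPair_mem_stdSimplex hp
  have hhg_pair (z : R × X × X) (hz : condPair p z ≠ 0) : h z.2.1 = g z.1 :=
    hhg _ (ne_zero_of_condPair_ne_zero hz).1
  have hfst : push (condPair p) Prod.fst = push p Prod.fst := by
    ext r
    rw [push_fst, push_fst, sum_condPair hp.1]
  have hgR : push (condPair p) (fun z ↦ g z.1) = push p fun z ↦ g z.1 := by
    rw [← push_push _ Prod.fst g, hfst, push_push]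
  have hhX : push (pairDist p) (fun z ↦ h z.1) = push p fun z ↦ g z.1 := by
    rw [← push_snd_condPair, push_push, push_congr_of_ne_zero hhg_pair, hgR]
  have hentropy := entropy_push_add_condEntropy_le hpair (f := fun z ↦ h z.1) hhg_pair
  have hdiv := relEntropy_colDist_le (pairDist_mem_stdSimplex hp)
    fun z ↦ eq_of_pairDist_ne_zero hhg
  rw [hgR, condEntropy_condPair hp.1, push_snd_condPair] at hentropy
  rw [hhX] at hdiv
  linarith

theorem stmt11_general (hp : p ∈ stdSimplex ℝ (R × X)) (hhg : ∀ z, p z ≠ 0 → h z.2 = g z.1)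
    {δ : ℝ} (hent : logb 2 (Fintype.card X) - δ ≤
      entropy (push p fun z ↦ g z.1) + condEntropy p) :
    statDist (pairDist p) (colDist h) ≤ √2 * √(log 2 / 2 * δ) := by
  rw [← sqrt_mul zero_le_two]
  refine le_sqrt_of_sq_le ?_
  have hac (z : X × X) : colDist h z = 0 → pairDist p z = 0 := by
    contrapose!
    exact fun hz ↦ (colDist_pos (eq_of_pairDist_ne_zero hhg hz)).ne'
  calc statDist (pairDist p) (colDist h) ^ 2
      ≤ log 2 / 2 * relEntropy (pairDist p) (colDist h) :=
        statDist_sq_le_relEntropy (pairDist_mem_stdSimplex hp) (colDist_nonneg h)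
          (sum_colDist_le_one h) hac
    _ ≤ log 2 / 2 * (2 * δ) := by
        gcongr
        linarith [relEntropy_pairDist_colDist_le hp hhg]
    _ = 2 * (log 2 / 2 * δ) := by ring

end Main

/-- Let `h : {0,1}ⁿ → {0,1}^m`, `R` a finite random variable, `g` a map into
`{0,1}^m`, `X` jointly distributed with `R` (joint law `p`) with `h(X) = g(R)` a.s., and `δ ≥ 0`
with `H(g(R)) + H(X | R) ≥ n − δ`.  Let `D_A` sample `r ← R` and then `x₁, x₂` independently from
`X|_{R=r}`, and let `Col` sample `x₁` uniform on `{0,1}ⁿ` and `x₂` uniform on `h⁻¹(h(x₁))`.  Then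
`Δ(D_A, Col) ≤ 2·√((ln 2 / 2)·δ)`. -/
theorem stmt11 {ΩR : Type*} [Fintype ΩR] [DecidableEq ΩR] (n m : ℕ)
    (h : (Fin n → Bool) → (Fin m → Bool)) (g : ΩR → (Fin m → Bool))
    (p : ΩR × (Fin n → Bool) → ℝ)
    (hp0 : ∀ z, 0 ≤ p z) (hp1 : ∑ z, p z = 1)
    (has : ∀ r x, 0 < p (r, x) → h x = g r)
    (δ : ℝ) (hδ : 0 ≤ δ)
    (hent : entropy (push p (fun rx => g rx.1)) +
        (∑ r, (∑ x, p (r, x)) * entropy (fun x => p (r, x) / ∑ x', p (r, x'))) ≥ (n : ℝ) - δ) :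
    statDist
      (fun x12 : (Fin n → Bool) × (Fin n → Bool) =>
        ∑ r, (∑ x, p (r, x)) *
          ((p (r, x12.1) / ∑ x', p (r, x')) * (p (r, x12.2) / ∑ x', p (r, x'))))
      (fun x12 : (Fin n → Bool) × (Fin n → Bool) =>
        ((2 : ℝ) ^ n)⁻¹ *
          (if h x12.2 = h x12.1 then
            ((Finset.univ.filter (fun x' => h x' = h x12.1)).card : ℝ)⁻¹ else 0)) ≤
      2 * Real.sqrt ((Real.log 2 / 2) * δ) := by
  have hcard : (Fintype.card (Fin n → Bool) : ℝ) = 2 ^ n := by simp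
  have hgen := stmt11_general (h := h) ⟨hp0, hp1⟩
    (fun z hz ↦ has z.1 z.2 ((hp0 z).lt_of_ne' hz)) (by
      rw [hcard, logb_pow, logb_self_eq_one one_lt_two, mul_one]
      exact hent)
  rw [show colDist h = _ from funext fun _ ↦ by rw [colDist, hcard]] at hgen
  exact hgen.trans (by gcongr; exact sqrt_le_self_iff.2 (.inr one_le_two))
end
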